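/- Let ω be a radial weight on 𝔻. Then the following are equivalent: (i) ω belongs to D̂; (ii) for some β>0 the radial weight z ↦ ω̂(z)(1−|z|)^{β−1} belongs to D̂; (iii) for every β>0 the radial weight z ↦ ω̂(z)(1−|z|)^{β−1} belongs to D̂. -/

import Mathlib

open MeasureTheory Real Set Metric

noncomputable section

/-- The tail integral `ω̂(r) = ∫_r^1 ω(t) dt` of a radial weight, as a function of the radius. -/
def tailInt (ω : ℝ → ℝ) (r : ℝ) : ℝ := ∫ t in Ioo r 1, ω t

/-- A radial weight on the unit disc, identified with its profile on `[0,1)`: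
nonnegative, measurable, integrable on `(0,1)`, with strictly positive tail integrals. -/
def IsRadialWeight (ω : ℝ → ℝ) : Prop :=
  Measurable ω ∧ (∀ r, 0 ≤ ω r) ∧ IntegrableOn ω (Ioo (0:ℝ) 1) ∧
    ∀ r ∈ Ico (0:ℝ) 1, 0 < tailInt ω r

/-- The class `D̂` of radial weights whose tail integral satisfies a doubling condition. -/
def Dhat (ω : ℝ → ℝ) : Prop :=
  ∃ C : ℝ, 1 < C ∧ ∀ r ∈ Ico (0:ℝ) 1, tailInt ω r ≤ C * tailInt ω ((1 + r) / 2)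

/-- The class `Ď` of radial weights. -/
def Dcheck (ω : ℝ → ℝ) : Prop :=
  ∃ K : ℝ, 1 < K ∧ ∃ C : ℝ, 1 < C ∧ ∀ r ∈ Ico (0:ℝ) 1,
    C * tailInt ω (1 - (1 - r) / K) ≤ tailInt ω r

/-- The class `𝒟 = D̂ ∩ Ď`. -/
def Dclass (ω : ℝ → ℝ) : Prop := Dhat ω ∧ Dcheck ω

/-- The moment `ω_x = ∫_0^1 r^x ω(r) dr` of a radial weight. -/
def momentW (ω : ℝ → ℝ) (x : ℝ) : ℝ := ∫ r in Ioo (0:ℝ) 1, r ^ x * ω r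

/-- The class `ℳ` of radial weights. -/
def Mclass (ω : ℝ → ℝ) : Prop :=
  ∃ K : ℝ, 1 < K ∧ ∃ C : ℝ, 1 < C ∧ ∀ x : ℝ, 1 ≤ x → C * momentW ω (K * x) ≤ momentW ω x

/-- The maximum modulus `M_∞(r,f)` on the circle of radius `r`. -/
def Minf (f : ℂ → ℂ) (r : ℝ) : ℝ :=
  sSup ((fun z => ‖f z‖) '' sphere (0:ℂ) r)

/-- The integral mean `M_q(r,f)` for `0 < q < ∞`. -/
def Mq (q : ℝ) (f : ℂ → ℂ) (r : ℝ) : ℝ :=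
  ((2 * π)⁻¹ * ∫ θ in (0:ℝ)..(2 * π),
      ‖f ((r : ℂ) * Complex.exp ((θ : ℂ) * Complex.I))‖ ^ q) ^ q⁻¹

/-- `J^p_ω(f) = ∫_0^1 M_∞(r,f)^p ω(r) dr`. -/
def Jp (p : ℝ) (ω : ℝ → ℝ) (f : ℂ → ℂ) : ℝ :=
  ∫ r in Ioo (0:ℝ) 1, Minf f r ^ p * ω r

/-- `‖f‖_{H^p_ω}^p = ∫_𝔻 p²|f|^{p-2}|f'|² ω̂(|z|) dA(z)`, integrand `0` where `f' = 0`. -/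
def HpNormP (p : ℝ) (ω : ℝ → ℝ) (f : ℂ → ℂ) : ℝ :=
  ∫ z in ball (0:ℂ) 1,
    if deriv f z = 0 then 0
    else p ^ 2 * ‖f z‖ ^ (p - 2) * ‖deriv f z‖ ^ 2
        * tailInt ω ‖z‖

/-- `‖f‖_{S^p_ω}^p = ∫_0^1 (∫_{D(0,r)} |f'|² dA)^{p/2} ω(r) dr`. -/
def SpNormP (p : ℝ) (ω : ℝ → ℝ) (f : ℂ → ℂ) : ℝ :=
  ∫ r in Ioo (0:ℝ) 1,
    (∫ z in ball (0:ℂ) r, ‖deriv f z‖ ^ 2) ^ (p / 2) * ω r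

/-- The `k`-th Maclaurin coefficient `f̂(k) = f^{(k)}(0)/k!`. -/
def coefF (f : ℂ → ℂ) (k : ℕ) : ℂ := iteratedDeriv k f 0 / (k.factorial : ℂ)

/-- Weighted Bergman-type integral `∫_𝔻 |f(z)|^p (1-|z|)^x w(|z|) dA(z)`. -/
def Apq (p x : ℝ) (w : ℝ → ℝ) (f : ℂ → ℂ) : ℝ :=
  ∫ z in ball (0:ℂ) 1,
    ‖f z‖ ^ p * (1 - ‖z‖) ^ x * w ‖z‖

/-- Weighted Dirichlet-type integral `∫_𝔻 |f'(z)|^p (1-|z|)^x w(|z|) dA(z)`. -/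
def DirInt (p x : ℝ) (w : ℝ → ℝ) (f : ℂ → ℂ) : ℝ :=
  ∫ z in ball (0:ℂ) 1,
    ‖deriv f z‖ ^ p * (1 - ‖z‖) ^ x * w ‖z‖

/-- The class `𝒮` of normalized univalent functions on the unit disc. -/
def InSclass (f : ℂ → ℂ) : Prop :=
  DifferentiableOn ℂ f (ball (0:ℂ) 1) ∧ InjOn f (ball (0:ℂ) 1) ∧ f 0 = 0 ∧ deriv f 0 = 1

theorem aux_anti {ω : ℝ → ℝ} (hω : IsRadialWeight ω) : AntitoneOn (tailInt ω) (Ico (0:ℝ) 1) := by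
  intro a ha b hb hab
  unfold tailInt
  apply setIntegral_mono_set
  · exact hω.2.2.1.mono_set (Ioo_subset_Ioo_left ha.1)
  · exact Filter.Eventually.of_forall hω.2.1
  · exact (Ioo_subset_Ioo_left hab).eventuallyLE

theorem aux_pow_int {β : ℝ} (hβ : 0 < β) (a b : ℝ) :
    IntervalIntegrable (fun t : ℝ => (1 - t) ^ (β - 1)) volume a b := by
  have h := intervalIntegral.intervalIntegrable_rpow' (a := 1 - a) (b := 1 - b)
    (r := β - 1) (by linarith)
  simpa using h.comp_sub_left 1

theorem aux_pow {β : ℝ} (hβ : 0 < β) (a b : ℝ) :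
    ∫ t in a..b, (1 - t) ^ (β - 1) = ((1 - a) ^ β - (1 - b) ^ β) / β := by
  rw [intervalIntegral.integral_comp_sub_left (fun x : ℝ => x ^ (β - 1)) 1,
    integral_rpow (Or.inl (by linarith))]
  simp

theorem aux_int {ω : ℝ → ℝ} (hω : IsRadialWeight ω) {β : ℝ} (hβ : 0 < β) :
    IntegrableOn (fun t => tailInt ω t * (1 - t) ^ (β - 1)) (Ioo (0:ℝ) 1) := by
  have h1 : IntegrableOn (fun t : ℝ => (1 - t) ^ (β - 1)) (Ioo (0:ℝ) 1) :=
    (intervalIntegrable_iff_integrableOn_Ioo_of_le zero_le_one).1 (aux_pow_int hβ 0 1)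
  have hm : AEMeasurable (tailInt ω) (volume.restrict (Ioo (0:ℝ) 1)) :=
    aemeasurable_restrict_of_antitoneOn measurableSet_Ioo
      ((aux_anti hω).mono Ioo_subset_Ico_self)
  refine Integrable.bdd_mul (c := tailInt ω 0) h1 hm.aestronglyMeasurable ?_
  filter_upwards [ae_restrict_mem measurableSet_Ioo] with t ht
  rw [Real.norm_of_nonneg (hω.2.2.2 t (Ioo_subset_Ico_self ht)).le]
  exact aux_anti hω ⟨le_rfl, one_pos⟩ (Ioo_subset_Ico_self ht) ht.1.le

theorem aux_ii {f : ℝ → ℝ} (hf : IntegrableOn f (Ioo (0:ℝ) 1)) {a b : ℝ} (ha : 0 ≤ a)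
    (hab : a ≤ b) (hb : b ≤ 1) : IntervalIntegrable f volume a b :=
  (intervalIntegrable_iff_integrableOn_Ioo_of_le hab).2 (hf.mono_set (Ioo_subset_Ioo ha hb))

theorem aux_tail (f : ℝ → ℝ) {r : ℝ} (hr : r ≤ 1) : tailInt f r = ∫ t in r..1, f t := by
  rw [tailInt, intervalIntegral.integral_of_le hr, integral_Ioc_eq_integral_Ioo]

theorem aux_fwd {ω : ℝ → ℝ} (hω : IsRadialWeight ω) (h : Dhat ω) {β : ℝ} (hβ : 0 < β) :
    Dhat (fun t => tailInt ω t * (1 - t) ^ (β - 1)) := by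
  obtain ⟨C, hC, h⟩ := h
  set f : ℝ → ℝ := fun t => tailInt ω t * (1 - t) ^ (β - 1) with hf
  have hfi := aux_int hω hβ
  have h2 : (1:ℝ) < 2 ^ β := Real.one_lt_rpow one_lt_two hβ
  refine ⟨C * 2 ^ β, by nlinarith, fun r hr => ?_⟩
  obtain ⟨hr0, hr1⟩ := hr
  have hcv := intervalIntegral.integral_comp_mul_sub (a := (1 + r) / 2) (b := 1) f
    (c := 2) two_ne_zero 1
  have e1 : (2:ℝ) * ((1 + r) / 2) - 1 = r := by ring
  have e2 : (2:ℝ) * 1 - 1 = 1 := by ring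
  rw [e1, e2, smul_eq_mul] at hcv
  have hI : IntervalIntegrable (fun x => f (2 * x - 1)) volume ((1 + r) / 2) 1 := by
    have := (aux_ii hfi hr0 hr1.le le_rfl)
    have := (this.comp_sub_right 1).comp_mul_left (c := 2)
    convert this using 1 <;> ring
  rw [aux_tail f hr1.le, aux_tail f (by linarith)]
  have hle : ∫ x in (1 + r) / 2..1, f (2 * x - 1) ≤
      ∫ x in (1 + r) / 2..1, (C * 2 ^ (β - 1)) * f x := by
    apply intervalIntegral.integral_mono_on_of_le_Ioo (by linarith) hI
    · exact (aux_ii hfi (by linarith) (by linarith) le_rfl).const_mul _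
    · intro x hx
      obtain ⟨hx1, hx2⟩ := hx
      have hw := h (2 * x - 1) ⟨by linarith, by linarith⟩
      rw [show (1 + (2 * x - 1)) / 2 = x by ring] at hw
      simp only [hf]
      rw [show 1 - (2 * x - 1) = 2 * (1 - x) by ring, Real.mul_rpow (by norm_num) (by linarith)]
      have hp : 0 ≤ (2:ℝ) ^ (β - 1) * (1 - x) ^ (β - 1) :=
        mul_nonneg (by positivity) (Real.rpow_nonneg (by linarith) _)
      calc _ ≤ (C * tailInt ω x) * ((2:ℝ) ^ (β - 1) * (1 - x) ^ (β - 1)) :=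
            mul_le_mul_of_nonneg_right hw hp
        _ = _ := by ring
  rw [intervalIntegral.integral_const_mul, hcv] at hle
  have e3 : (2:ℝ) ^ β = 2 * 2 ^ (β - 1) := by
    rw [Real.rpow_sub_one two_ne_zero]; ring
  rw [e3]
  linarith

theorem aux_bwd {ω : ℝ → ℝ} (hω : IsRadialWeight ω) {β : ℝ} (hβ : 0 < β)
    (h : Dhat (fun t => tailInt ω t * (1 - t) ^ (β - 1))) : Dhat ω := by
  obtain ⟨C, hC, h⟩ := h
  have hfi := aux_int hω hβ
  have han := aux_anti hω
  have hpos := hω.2.2.2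
  set f : ℝ → ℝ := fun t => tailInt ω t * (1 - t) ^ (β - 1) with hf
  have hf0 : ∀ t ∈ Ico (0:ℝ) 1, 0 ≤ f t := fun t ht =>
    mul_nonneg (hpos t ht).le (Real.rpow_nonneg (by linarith [ht.2]) _)
  have h2 : (1:ℝ) < 2 ^ β := Real.one_lt_rpow one_lt_two hβ
  have hup : ∀ s ∈ Ico (0:ℝ) 1, tailInt f s ≤ tailInt ω s * ((1 - s) ^ β / β) := by
    intro s hs
    have hp := aux_pow hβ s 1
    rw [sub_self, Real.zero_rpow hβ.ne', sub_zero] at hp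
    rw [aux_tail f hs.2.le, ← hp, ← intervalIntegral.integral_const_mul]
    apply intervalIntegral.integral_mono_on_of_le_Ioo hs.2.le (aux_ii hfi hs.1 hs.2.le le_rfl)
      ((aux_pow_int hβ _ _).const_mul _)
    intro x hx
    exact mul_le_mul_of_nonneg_right (han hs ⟨hs.1.trans hx.1.le, hx.2⟩ hx.1.le)
      (Real.rpow_nonneg (by linarith [hx.2]) _)
  have hlow : ∀ s r, 0 ≤ s → s ≤ r → r < 1 →
      tailInt ω r * (((1 - s) ^ β - (1 - r) ^ β) / β) ≤ tailInt f s := by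
    intro s r hs hsr hr
    rw [aux_tail f (by linarith), ← aux_pow hβ s r, ← intervalIntegral.integral_const_mul,
      ← intervalIntegral.integral_add_adjacent_intervals (aux_ii hfi hs hsr hr.le)
        (aux_ii hfi (by linarith) hr.le le_rfl)]
    have hn : 0 ≤ ∫ x in r..1, f x := by
      rw [← aux_tail f hr.le]
      exact setIntegral_nonneg measurableSet_Ioo
        fun x hx => hf0 x ⟨by linarith [hx.1], hx.2⟩
    have : ∫ x in s..r, tailInt ω r * (1 - x) ^ (β - 1) ≤ ∫ x in s..r, f x := by
      apply intervalIntegral.integral_mono_on_of_le_Ioo hsr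
        ((aux_pow_int hβ _ _).const_mul _) (aux_ii hfi hs hsr hr.le)
      intro x hx
      exact mul_le_mul_of_nonneg_right
        (han ⟨by linarith [hx.1], by linarith [hx.2]⟩ ⟨by linarith, hr⟩ hx.2.le)
        (Real.rpow_nonneg (by linarith [hx.2]) _)
    linarith
  set A := C ^ 2 / (2 ^ β - 1) with hA
  set B := tailInt ω 0 / tailInt ω (3 / 4) with hB
  have hA0 : 0 < A := div_pos (by positivity) (by linarith)
  have h34 := hpos (3 / 4) ⟨by norm_num, by norm_num⟩
  have h00 := hpos 0 ⟨by norm_num, by norm_num⟩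
  have hB0 : 0 < B := div_pos h00 h34
  refine ⟨1 + A + B, by linarith, fun r hr => ?_⟩
  obtain ⟨hr0, hr1⟩ := hr
  have hm : (1 + r) / 2 ∈ Ico (0:ℝ) 1 := ⟨by linarith, by linarith⟩
  have hW1 := hpos _ hm
  rcases le_or_gt (1 / 2) r with hr2 | hr2
  · have l := hlow (2 * r - 1) r (by linarith) (by linarith) hr1
    have d1 := h (2 * r - 1) ⟨by linarith, by linarith⟩
    rw [show (1 + (2 * r - 1)) / 2 = r by ring] at d1
    have d2 := h r ⟨hr0, hr1⟩
    have u := hup _ hm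
    have hq : 0 < (1 - r) ^ β := Real.rpow_pos_of_pos (by linarith) _
    rw [show 1 - (2 * r - 1) = 2 * (1 - r) by ring, Real.mul_rpow (by norm_num) (by linarith)] at l
    have hu : (1 - (1 + r) / 2) ^ β ≤ (1 - r) ^ β :=
      Real.rpow_le_rpow (by linarith) (by linarith) hβ.le
    have hu' : tailInt ω ((1 + r) / 2) * ((1 - (1 + r) / 2) ^ β / β) ≤
        tailInt ω ((1 + r) / 2) * ((1 - r) ^ β / β) := by gcongr
    have key : tailInt ω r * ((2 ^ β * (1 - r) ^ β - (1 - r) ^ β) / β) ≤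
        C * (C * (tailInt ω ((1 + r) / 2) * ((1 - r) ^ β / β))) := by
      refine l.trans (d1.trans ?_)
      gcongr
      refine d2.trans ?_
      gcongr
      exact u.trans hu'
    have hqb : 0 < (1 - r) ^ β / β := by positivity
    have key2 : tailInt ω r * (2 ^ β - 1) ≤ C ^ 2 * tailInt ω ((1 + r) / 2) := by
      refine le_of_mul_le_mul_right ?_ hqb
      calc _ = tailInt ω r * ((2 ^ β * (1 - r) ^ β - (1 - r) ^ β) / β) := by ring
        _ ≤ _ := key
        _ = _ := by ring
    have : tailInt ω r ≤ A * tailInt ω ((1 + r) / 2) := by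
      rw [hA, div_mul_eq_mul_div, le_div_iff₀ (by linarith)]
      exact key2
    nlinarith
  · have a1 := han ⟨le_rfl, one_pos⟩ ⟨hr0, hr1⟩ hr0
    have a2 := han hm ⟨by norm_num, by norm_num⟩ (show (1 + r) / 2 ≤ 3 / 4 by linarith)
    have : tailInt ω 0 = B * tailInt ω (3 / 4) := by rw [hB]; field_simp
    nlinarith

theorem statement7 (ω : ℝ → ℝ) (hω : IsRadialWeight ω) :
    (Dhat ω ↔ ∃ β : ℝ, 0 < β ∧ Dhat (fun t => tailInt ω t * (1 - t) ^ (β - 1))) ∧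
    (Dhat ω ↔ ∀ β : ℝ, 0 < β → Dhat (fun t => tailInt ω t * (1 - t) ^ (β - 1))) :=
  ⟨⟨fun h => ⟨1, one_pos, aux_fwd hω h one_pos⟩, fun ⟨_, hβ, h⟩ => aux_bwd hω hβ h⟩,
    ⟨fun h _ hβ => aux_fwd hω h hβ, fun h => aux_bwd hω one_pos (h 1 one_pos)⟩⟩
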